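/- Suppose the system satisfies monotonicity in payoffs and that for every user i there exists a priority decision d with p_i(d) > 0. Then for every nonempty subset S ⊆ N and every nonzero α ∈ ℝⁿ with α ⪰ 0 and α_i = 0 for i ∉ S, max_{d ∈ D(S)} ⟨α, p(d)^S⟩ > 0. -/

import Mathlib

open Finset Set

/-- `inDS S d` : the priority decision `d` assigns the `|S|` highest priorities
(i.e. the ranks `k` with `(k : ℕ) < S.card`) exactly to the users in `S`. -/
def inDS {n : ℕ} (S : Finset (Fin n)) (d : Equiv.Perm (Fin n)) : Prop :=
  ∀ k : Fin n, d k ∈ S ↔ (k : ℕ) < S.card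

/-- The projection `x^S` of a vector on the coordinates in `S`. -/
def projS {n : ℕ} (S : Finset (Fin n)) (x : Fin n → ℝ) : Fin n → ℝ :=
  fun i => if i ∈ S then x i else 0

/-- Euclidean inner product on `ℝⁿ`. -/
def ip {n : ℕ} (a b : Fin n → ℝ) : ℝ := ∑ i, a i * b i

/-- `P = {p(d) : d ∈ D}`. -/
def Pfull {n : ℕ} (p : Equiv.Perm (Fin n) → Fin n → ℝ) : Set (Fin n → ℝ) :=
  Set.range p

/-- `P^S = {p(d)^S : d ∈ D(S)}`. -/
def PS {n : ℕ} (p : Equiv.Perm (Fin n) → Fin n → ℝ) (S : Finset (Fin n)) :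
    Set (Fin n → ℝ) :=
  {y | ∃ d : Equiv.Perm (Fin n), inDS S d ∧ y = projS S (p d)}

/-- `C` : the set of nonnegative vectors dominated by a point of `conv(P)`. -/
def Cfull {n : ℕ} (p : Equiv.Perm (Fin n) → Fin n → ℝ) : Set (Fin n → ℝ) :=
  {q | (∀ i, 0 ≤ q i) ∧ ∃ x ∈ convexHull ℝ (Pfull p), ∀ i, q i ≤ x i}

/-- `C^S` : nonnegative vectors supported on `S` dominated by a point of `conv(P^S)`. -/
def CS {n : ℕ} (p : Equiv.Perm (Fin n) → Fin n → ℝ) (S : Finset (Fin n)) :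
    Set (Fin n → ℝ) :=
  {q | (∀ i, 0 ≤ q i) ∧ (∀ i, i ∉ S → q i = 0) ∧
    ∃ x ∈ convexHull ℝ (PS p S), ∀ i, q i ≤ x i}

/-- `B^S` : nonnegative vectors supported on `S` dominating a point of `conv(P^S)`. -/
def BS {n : ℕ} (p : Equiv.Perm (Fin n) → Fin n → ℝ) (S : Finset (Fin n)) :
    Set (Fin n → ℝ) :=
  {q | (∀ i, 0 ≤ q i) ∧ (∀ i, i ∉ S → q i = 0) ∧
    ∃ x ∈ convexHull ℝ (PS p S), ∀ i, x i ≤ q i}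

/-- `S_i(d)` : the set of users with higher priority than user `i` under decision `d`. -/
def higherSet {n : ℕ} (d : Equiv.Perm (Fin n)) (i : Fin n) : Set (Fin n) :=
  {j | (d.symm j : ℕ) < (d.symm i : ℕ)}

/-- Monotonicity in payoffs: if `S_i(d₁) ⊆ S_i(d₂)` then `p_i(d₁) ≥ p_i(d₂)`. -/
def Mono {n : ℕ} (p : Equiv.Perm (Fin n) → Fin n → ℝ) : Prop :=
  ∀ d₁ d₂ : Equiv.Perm (Fin n), ∀ i : Fin n,
    higherSet d₁ i ⊆ higherSet d₂ i → p d₂ i ≤ p d₁ i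

/-- The inner-bound region `R_IB`. -/
def RIB {n : ℕ} (p : Equiv.Perm (Fin n) → Fin n → ℝ) : Set (Fin n → ℝ) :=
  {q | (∀ i, 0 ≤ q i) ∧ ∃ α : Fin n → ℝ, (∀ i, 0 < α i) ∧
    ∀ S : Finset (Fin n), ∀ d : Equiv.Perm (Fin n), inDS S d →
      ∑ i ∈ S, α i * q i ≤ ∑ i ∈ S, α i * p d i}

/-- The region `R = {q ⪰ 0 : ∀ S, q^S ∈ C^S \ B^S}`. -/
def Rreg {n : ℕ} (p : Equiv.Perm (Fin n) → Fin n → ℝ) : Set (Fin n → ℝ) :=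
  {q | (∀ i, 0 ≤ q i) ∧ ∀ S : Finset (Fin n), projS S q ∈ CS p S \ BS p S}


theorem stmt18 {n : ℕ} (hn : 1 ≤ n)
    (p : Equiv.Perm (Fin n) → Fin n → ℝ) (hp : ∀ d i, 0 ≤ p d i)
    (hmono : Mono p) (hpos : ∀ i : Fin n, ∃ d : Equiv.Perm (Fin n), 0 < p d i) :
    ∀ S : Finset (Fin n), S.Nonempty →
      ∀ α : Fin n → ℝ, α ≠ 0 → (∀ i, 0 ≤ α i) → (∀ i, i ∉ S → α i = 0) →
        0 < sSup ((fun d => ip α (projS S (p d))) '' {d | inDS S d}) := by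
  intro S hS α hα hα0 hαS
  obtain ⟨i, hi⟩ := Function.ne_iff.mp hα
  have hi' : 0 < α i := lt_of_le_of_ne (hα0 i) (Ne.symm hi)
  have hiS : i ∈ S := by
    by_contra h
    exact hi (hαS i h)
  have hc : 0 < S.card := Finset.card_pos.mpr hS
  have hle : S.card ≤ n := by simpa using Finset.card_le_univ S
  -- a decision in D(S)
  have hex : ∃ d : Equiv.Perm (Fin n), inDS S d := by
    have hcard : Fintype.card {k : Fin n // (k : ℕ) < S.card} = Fintype.card {x // x ∈ S} := by
      rw [Fintype.card_coe, Fintype.card_subtype, Fin.card_filter_val_lt]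
      omega
    let e := Fintype.equivOfCardEq hcard
    refine ⟨e.extendSubtype, fun k => ⟨fun h => ?_, fun h => e.extendSubtype_mem k h⟩⟩
    by_contra hk
    exact e.extendSubtype_not_mem k hk h
  obtain ⟨d, hd⟩ := hex
  let z : Fin n := ⟨0, hn⟩
  let d' : Equiv.Perm (Fin n) := (Equiv.swap z (d.symm i)).trans d
  have hd'z : d' z = i := by simp [d']
  have hd' : inDS S d' := by
    intro k
    have h1 : ((d.symm i : Fin n) : ℕ) < S.card := (hd _).mp (by simpa using hiS)
    have h2 : (z : ℕ) < S.card := hc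
    change d (Equiv.swap z (d.symm i) k) ∈ S ↔ _
    rw [hd]
    by_cases hkz : k = z
    · subst hkz
      rw [Equiv.swap_apply_left]
      exact ⟨fun _ => h2, fun _ => h1⟩
    · by_cases hki : k = d.symm i
      · rw [hki, Equiv.swap_apply_right]
        exact ⟨fun _ => h1, fun _ => h2⟩
      · rw [Equiv.swap_apply_of_ne_of_ne hkz hki]
  have hpi : 0 < p d' i := by
    obtain ⟨d₂, h₂⟩ := hpos i
    refine lt_of_lt_of_le h₂ (hmono d' d₂ i ?_)
    intro j hj
    have h0 : d'.symm i = z := by rw [← hd'z]; simp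
    simp [higherSet, h0, z] at hj
  have hip : 0 < ip α (projS S (p d')) := by
    unfold ip
    refine Finset.sum_pos' (fun j _ => mul_nonneg (hα0 j) ?_) ⟨i, Finset.mem_univ i, ?_⟩
    · unfold projS
      split_ifs
      · exact hp _ _
      · exact le_rfl
    · simp only [projS, hiS, if_true]
      exact mul_pos hi' hpi
  exact lt_of_lt_of_le hip
    (le_csSup ((Set.toFinite _).bddAbove) ⟨d', hd', rfl⟩)
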